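/- arXiv:math/0408391 — 3 statements merged into one kernel-verified Lean document; each statement's English description precedes it below -/
import Mathlib

section
/- Let n ≥ 1, let α : Fin n → ℂ satisfy 0 < ‖α i‖ < 1 for every i, fix a real constant C > 1, set β i := Real.log C / (− Real.log ‖α i‖), and define φ : (Fin n → ℂ) → ℝ by φ t = ∑ i, ‖t i‖ ^ (β i). Then for every t : Fin n → ℂ with t ≠ 0 there exists a unique integer k ∈ ℤ such that 1 ≤ φ (fun i => (α i)^k * t i) < C. Equivalently, ℂⁿ \ {0} is the disjoint union over k ∈ ℤ of the sets A^k(D), where D = { x : 1 ≤ φ(x) < C } is a fundamental domain for the cyclic group ⟨A⟩ generated by the diagonal contraction A = diag(α 1, …, α n). -/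
/-!
The exponents are chosen so that `‖α i‖ ^ β i = C⁻¹`, which makes `φ` homogeneous under the
contraction `A`: `φ (A ^ k t) = (C ^ k)⁻¹ * φ t` (`norm_zpow_mul_rpow`, summed over `i`).
Since `φ t > 0` for `t ≠ 0`, the condition `1 ≤ φ (A ^ k t) < C` says
`C ^ k ≤ φ t < C ^ (k + 1)`, and the half-open intervals `[C ^ k, C ^ (k + 1))` partition `(0, ∞)`.
-/

lemma norm_rpow_exponent {a : ℂ} (ha : 0 < ‖a‖ ∧ ‖a‖ < 1) {C : ℝ} (hC : 1 < C) :
    ‖a‖ ^ (Real.log C / (- Real.log ‖a‖)) = C⁻¹ := by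
  have hlog : Real.log ‖a‖ ≠ 0 := (Real.log_neg ha.1 ha.2).ne
  have hexp : Real.log ‖a‖ * (Real.log C / (- Real.log ‖a‖)) = - Real.log C := by
    field_simp
  rw [Real.rpow_def_of_pos ha.1, hexp, Real.exp_neg, Real.exp_log (by linarith)]

lemma norm_zpow_mul_rpow {a : ℂ} (ha : 0 < ‖a‖ ∧ ‖a‖ < 1) {C : ℝ} (hC : 1 < C) (k : ℤ) (z : ℂ) :
    ‖a ^ k * z‖ ^ (Real.log C / (- Real.log ‖a‖)) =
      (C ^ k)⁻¹ * ‖z‖ ^ (Real.log C / (- Real.log ‖a‖)) := by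
  rw [norm_mul, norm_zpow, Real.mul_rpow (zpow_nonneg ha.1.le k) (norm_nonneg z),
    ← Real.rpow_intCast, ← Real.rpow_mul ha.1.le, mul_comm (k : ℝ),
    Real.rpow_mul ha.1.le, norm_rpow_exponent ha hC,
    Real.rpow_intCast, inv_zpow]

lemma existsUnique_zpow_Ico {C s : ℝ} (hC : 1 < C) (hs : 0 < s) :
    ∃! k : ℤ, C ^ k ≤ s ∧ s < C ^ (k + 1) := by
  obtain ⟨k, hk⟩ := exists_mem_Ico_zpow hs hC
  refine ⟨k, ⟨hk.1, hk.2⟩, fun m hm => ?_⟩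
  have h1 : m < k + 1 := (zpow_lt_zpow_iff_right₀ hC).1 (hm.1.trans_lt hk.2)
  have h2 : k < m + 1 := (zpow_lt_zpow_iff_right₀ hC).1 (hk.1.trans_lt hm.2)
  omega

/-- `D = {x | 1 ≤ φ x < C}` is a fundamental domain for the cyclic group
generated by the diagonal contraction `A = diag(α 1, …, α n)` acting on
`ℂⁿ \ 0`: every nonzero `t` lands in `D` under a unique integer power of `A`. -/
theorem hopf_fundamental_domain
    (n : ℕ) (hn : 1 ≤ n) (α : Fin n → ℂ)
    (hα : ∀ i, 0 < ‖α i‖ ∧ ‖α i‖ < 1)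
    (C : ℝ) (hC : 1 < C)
    (β : Fin n → ℝ) (hβ : ∀ i, β i = Real.log C / (- Real.log ‖α i‖))
    (φ : (Fin n → ℂ) → ℝ) (hφ : ∀ t, φ t = ∑ i, ‖t i‖ ^ (β i)) :
    ∀ t : Fin n → ℂ, t ≠ 0 →
      ∃! k : ℤ, 1 ≤ φ (fun i => (α i) ^ k * t i) ∧ φ (fun i => (α i) ^ k * t i) < C := by
  intro t ht
  have hC0 : 0 < C := by linarith
  have hscale : ∀ k : ℤ, φ (fun i => (α i) ^ k * t i) = (C ^ k)⁻¹ * φ t := by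
    intro k
    rw [hφ, hφ, Finset.mul_sum]
    refine Finset.sum_congr rfl fun i _ => ?_
    rw [hβ i]
    exact norm_zpow_mul_rpow (hα i) hC k (t i)
  have hpos : 0 < φ t := by
    obtain ⟨i, hi⟩ := Function.ne_iff.1 ht
    rw [hφ]
    exact Finset.sum_pos' (fun j _ => Real.rpow_nonneg (norm_nonneg _) _)
      ⟨i, Finset.mem_univ i, Real.rpow_pos_of_pos (norm_pos_iff.2 hi) _⟩
  have hiff : ∀ k : ℤ, (1 ≤ φ (fun i => (α i) ^ k * t i) ∧ φ (fun i => (α i) ^ k * t i) < C) ↔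
      (C ^ k ≤ φ t ∧ φ t < C ^ (k + 1)) := by
    intro k
    have hk : 0 < C ^ k := zpow_pos hC0 k
    rw [hscale, le_inv_mul_iff₀ hk, inv_mul_lt_iff₀ hk, mul_one, zpow_add_one₀ hC0.ne']
  exact (existsUnique_congr hiff).2 (existsUnique_zpow_Ico hC hpos)
end

section
/- Let n ≥ 1 and let α : Fin n → ℂ satisfy 0 < ‖α i‖ < 1 for every i. Consider the ℤ-action on the subspace X = { t : Fin n → ℂ | t ≠ 0 } of ℂⁿ given by k • t = fun i => (α i)^k * t i. Then the orbit space X/ℤ, equipped with the quotient topology, is a compact Hausdorff topological space. -/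
/-!
Write `A = diag(α)`, and use the sup norm on `ℂⁿ`. Since there are finitely many `α i`, there are
`0 < a` and `b < 1` with `a ≤ ‖α i‖ ≤ b`, so that `a ‖t‖ ≤ ‖A t‖` and `‖Aᵏ t‖ ≤ bᵏ ‖t‖` for
`k ≥ 0`.

Compactness: for `t ≠ 0` the least integer `k` with `‖Aᵏ t‖ ≤ 1` satisfies `a ≤ ‖Aᵏ t‖`, so the
compact shell `a ≤ ‖t‖ ≤ 1` meets every orbit and surjects onto the quotient. The sup norm thus
plays the role of the potential `∑ |t_i|^{β_i}`.

Hausdorff: the projection is an open quotient map, so it suffices that the orbit relation is closed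
in `X × X`. It is the union of the graphs of the `Aᵏ`, each of which is closed, and the union is
locally finite: if `y = Aᵏ x` with the norms of `x` and `y` confined to `(m, M)`, `m > 0`, then
`m < b^|k| M`, which leaves finitely many `k`.
-/

namespace HopfQuotient

open Topology

variable {n : ℕ} {α : Fin n → ℂ}

/-- The `k`-th power of the diagonal map `diag(α)` on `ℂⁿ`. -/
noncomputable def act (α : Fin n → ℂ) (k : ℤ) (t : Fin n → ℂ) : Fin n → ℂ := fun i => α i ^ k * t i

/-- The orbit relation on `ℂⁿ \ 0`, in the form used to define the quotient. -/
def rel (α : Fin n → ℂ) (x y : {t : Fin n → ℂ // t ≠ 0}) : Prop :=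
  ∃ k : ℤ, (fun i => α i ^ k * x.1 i) = y.1

lemma act_zero (t : Fin n → ℂ) : act α 0 t = t := by
  ext i; simp [act]

lemma act_add (h0 : ∀ i, α i ≠ 0) (k l : ℤ) (t : Fin n → ℂ) :
    act α (k + l) t = act α k (act α l t) := by
  ext i; simp [act, zpow_add₀ (h0 i), mul_assoc]

lemma act_neg_act (h0 : ∀ i, α i ≠ 0) (k : ℤ) (t : Fin n → ℂ) :
    act α (-k) (act α k t) = t := by
  rw [← act_add h0, neg_add_cancel, act_zero]

lemma act_ne_zero (h0 : ∀ i, α i ≠ 0) (k : ℤ) {t : Fin n → ℂ} (ht : t ≠ 0) :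
    act α k t ≠ 0 := by
  intro h
  apply ht
  rw [← act_neg_act h0 k t, h]
  ext i; simp [act]

lemma continuous_act (k : ℤ) : Continuous (act α k) := by
  unfold act; fun_prop

lemma norm_act_natCast_le {b : ℝ} (hb0 : 0 < b) (hb : ∀ i, ‖α i‖ ≤ b) (k : ℕ) (t : Fin n → ℂ) :
    ‖act α k t‖ ≤ b ^ k * ‖t‖ := by
  refine (pi_norm_le_iff_of_nonneg (by positivity)).2 fun i => ?_
  simp only [act, zpow_natCast, norm_mul, norm_pow]
  gcongr
  · exact hb i
  · exact norm_le_pi_norm t i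

lemma mul_norm_le_norm_act_one {a : ℝ} (ha0 : 0 < a) (ha : ∀ i, a ≤ ‖α i‖) (t : Fin n → ℂ) :
    a * ‖t‖ ≤ ‖act α 1 t‖ := by
  rw [← le_div_iff₀' ha0]
  refine (pi_norm_le_iff_of_nonneg (by positivity)).2 fun i => ?_
  rw [le_div_iff₀' ha0]
  calc a * ‖t i‖ ≤ ‖α i‖ * ‖t i‖ := by gcongr; exact ha i
    _ = ‖act α 1 t i‖ := by simp [act]
    _ ≤ _ := norm_le_pi_norm _ i

/-- A power `k` moving a point of norm in `(m, M)` to another such point satisfies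
`m < b ^ |k| * M`. -/
lemma lt_pow_natAbs_mul (h0 : ∀ i, α i ≠ 0) {b m M : ℝ} (hb0 : 0 < b) (hb : ∀ i, ‖α i‖ ≤ b)
    {k : ℤ} {x : Fin n → ℂ} (hx : m < ‖x‖) (hxM : ‖x‖ < M)
    (hy : m < ‖act α k x‖) (hyM : ‖act α k x‖ < M) : m < b ^ k.natAbs * M := by
  have hpos : 0 < b ^ k.natAbs := by positivity
  rcases Int.natAbs_eq k with h | h
  · have := norm_act_natCast_le hb0 hb k.natAbs x
    rw [← h] at this
    nlinarith
  · have := norm_act_natCast_le hb0 hb k.natAbs (act α k x)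
    rw [show (k.natAbs : ℤ) = -k by omega, act_neg_act h0] at this
    nlinarith

lemma exists_act_mem_shell (h0 : ∀ i, α i ≠ 0) {a b : ℝ} (ha0 : 0 < a) (ha : ∀ i, a ≤ ‖α i‖)
    (hb0 : 0 < b) (hb1 : b < 1) (hb : ∀ i, ‖α i‖ ≤ b) {t : Fin n → ℂ} (ht : t ≠ 0) :
    ∃ k : ℤ, a ≤ ‖act α k t‖ ∧ ‖act α k t‖ ≤ 1 := by
  have htpos : 0 < ‖t‖ := norm_pos_iff.2 ht
  obtain ⟨N, hN⟩ := exists_pow_lt_of_lt_one htpos hb1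
  obtain ⟨N', hN'⟩ := exists_pow_lt_of_lt_one (inv_pos.2 htpos) hb1
  obtain ⟨k, hk, hmin⟩ := Int.exists_least_of_bdd (P := fun k : ℤ => ‖act α k t‖ ≤ 1)
    ⟨-N, fun z hz => by
      by_contra! hlt
      have h1 := norm_act_natCast_le hb0 hb z.natAbs (act α z t)
      rw [show (z.natAbs : ℤ) = -z by omega, act_neg_act h0] at h1
      have h2 : b ^ z.natAbs ≤ b ^ N := pow_le_pow_of_le_one hb0.le hb1.le (by omega)
      have h3 : 0 < b ^ z.natAbs := by positivity
      nlinarith⟩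
    ⟨N', (norm_act_natCast_le hb0 hb N' t).trans (by
      have := mul_lt_mul_of_pos_right hN' htpos
      rw [inv_mul_cancel₀ htpos.ne'] at this
      exact this.le)⟩
  refine ⟨k, ?_, hk⟩
  have h1 : 1 < ‖act α (k - 1) t‖ := by
    by_contra! h
    have := hmin _ h
    omega
  have h2 := mul_norm_le_norm_act_one ha0 ha (act α (k - 1) t)
  rw [← act_add h0, add_sub_cancel] at h2
  nlinarith

lemma rel_equivalence (h0 : ∀ i, α i ≠ 0) : Equivalence (rel α) where
  refl x := ⟨0, act_zero x.1⟩
  symm := by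
    rintro x y ⟨k, hk⟩
    exact ⟨-k, by rw [← hk]; exact act_neg_act h0 k x.1⟩
  trans := by
    rintro x y z ⟨k, hk⟩ ⟨l, hl⟩
    exact ⟨l + k, by rw [← hl, ← hk]; exact act_add h0 l k x.1⟩

lemma compactSpace_quot (h0 : ∀ i, α i ≠ 0) {a b : ℝ} (ha0 : 0 < a) (ha : ∀ i, a ≤ ‖α i‖)
    (hb0 : 0 < b) (hb1 : b < 1) (hb : ∀ i, ‖α i‖ ≤ b) : CompactSpace (Quot (rel α)) := by
  let K : Set {t : Fin n → ℂ // t ≠ 0} := {x | a ≤ ‖x.1‖ ∧ ‖x.1‖ ≤ 1}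
  have hK : IsCompact K := by
    rw [Subtype.isCompact_iff]
    have himage : Subtype.val '' K = Metric.closedBall (0 : Fin n → ℂ) 1 ∩ {t | a ≤ ‖t‖} := by
      ext t
      constructor
      · rintro ⟨x, hx, rfl⟩
        exact ⟨mem_closedBall_zero_iff.2 hx.2, hx.1⟩
      · rintro ⟨h1, h2⟩
        exact ⟨⟨t, norm_pos_iff.1 (ha0.trans_le h2)⟩, ⟨h2, mem_closedBall_zero_iff.1 h1⟩, rfl⟩
    rw [himage]
    exact (isCompact_closedBall _ _).inter_right (isClosed_le continuous_const continuous_norm)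
  refine ⟨?_⟩
  convert hK.image (continuous_quot_mk (r := rel α))
  refine (Set.eq_univ_of_forall fun q => ?_).symm
  obtain ⟨x, rfl⟩ := Quot.exists_rep q
  obtain ⟨k, hk⟩ := exists_act_mem_shell h0 ha0 ha hb0 hb1 hb x.2
  exact ⟨⟨act α k x.1, act_ne_zero h0 k x.2⟩, hk, (Quot.sound ⟨k, rfl⟩).symm⟩

lemma isOpenQuotientMap_mk (h0 : ∀ i, α i ≠ 0) : IsOpenQuotientMap (Quot.mk (rel α)) := by
  refine ⟨Quot.mk_surjective, continuous_quot_mk, fun U hU => ?_⟩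
  rw [← isQuotientMap_quot_mk.isOpen_preimage]
  -- The saturation of `U` is the union of its preimages under all powers.
  have hsat : Quot.mk (rel α) ⁻¹' (Quot.mk (rel α) '' U) =
      ⋃ k : ℤ, (fun x : {t : Fin n → ℂ // t ≠ 0} =>
        (⟨act α k x.1, act_ne_zero h0 k x.2⟩ : {t : Fin n → ℂ // t ≠ 0})) ⁻¹' U := by
    ext x
    simp only [Set.mem_preimage, Set.mem_image, Set.mem_iUnion]
    constructor
    · rintro ⟨y, hy, hyx⟩
      obtain ⟨k, hk⟩ := ((rel_equivalence h0).quot_mk_eq_iff x y).1 hyx.symm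
      refine ⟨k, ?_⟩
      convert hy
      exact hk
    · rintro ⟨k, hk⟩
      exact ⟨_, hk, (Quot.sound ⟨k, rfl⟩).symm⟩
  rw [hsat]
  exact isOpen_iUnion fun k => hU.preimage
    (((continuous_act k).comp continuous_subtype_val).subtype_mk _)

lemma t2Space_quot (h0 : ∀ i, α i ≠ 0) {b : ℝ}
    (hb0 : 0 < b) (hb1 : b < 1) (hb : ∀ i, ‖α i‖ ≤ b) : T2Space (Quot (rel α)) := by
  rw [t2Space_iff_of_isOpenQuotientMap (isOpenQuotientMap_mk h0)]
  let G : ℤ → Set ({t : Fin n → ℂ // t ≠ 0} × {t : Fin n → ℂ // t ≠ 0}) :=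
    fun k => {q | act α k q.1.1 = q.2.1}
  have hG : {q : {t : Fin n → ℂ // t ≠ 0} × {t : Fin n → ℂ // t ≠ 0} |
      Quot.mk (rel α) q.1 = Quot.mk (rel α) q.2} = ⋃ k, G k := by
    ext q
    simp only [Set.mem_ofPred_eq, (rel_equivalence h0).quot_mk_eq_iff, Set.mem_iUnion]
    rfl
  rw [hG]
  refine LocallyFinite.isClosed_iUnion ?_ fun k => isClosed_eq
    ((continuous_act k).comp (by fun_prop)) (by fun_prop)
  rintro ⟨x, y⟩
  have hx : 0 < ‖x.1‖ := norm_pos_iff.2 x.2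
  have hy : 0 < ‖y.1‖ := norm_pos_iff.2 y.2
  obtain ⟨m, hm0, hm⟩ := exists_between (lt_min hx hy)
  obtain ⟨M, hM⟩ := exists_gt (max ‖x.1‖ ‖y.1‖)
  rw [lt_min_iff] at hm
  rw [max_lt_iff] at hM
  have hM0 : 0 < M := hx.trans hM.1
  refine ⟨{q | (m < ‖q.1.1‖ ∧ ‖q.1.1‖ < M) ∧ (m < ‖q.2.1‖ ∧ ‖q.2.1‖ < M)}, ?_, ?_⟩
  · refine IsOpen.mem_nhds ?_ ⟨⟨hm.1, hM.1⟩, ⟨hm.2, hM.2⟩⟩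
    exact ((isOpen_lt (by fun_prop) (by fun_prop)).and (isOpen_lt (by fun_prop) (by fun_prop))).and
      ((isOpen_lt (by fun_prop) (by fun_prop)).and (isOpen_lt (by fun_prop) (by fun_prop)))
  · obtain ⟨N, hN⟩ := exists_pow_lt_of_lt_one (div_pos hm0 hM0) hb1
    rw [lt_div_iff₀ hM0] at hN
    refine (Set.finite_Icc (-(N : ℤ)) N).subset ?_
    rintro k ⟨⟨u, v⟩, huv, ⟨hu, huM⟩, ⟨hv, hvM⟩⟩
    change act α k u.1 = v.1 at huv
    dsimp only at hu huM hv hvM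
    rw [← huv] at hv hvM
    have h1 := lt_pow_natAbs_mul h0 hb0 hb hu huM hv hvM
    have h2 : k.natAbs < N := by
      by_contra! h
      have := mul_le_mul_of_nonneg_right (pow_le_pow_of_le_one hb0.le hb1.le h) hM0.le
      linarith
    rw [Set.mem_Icc]
    omega

end HopfQuotient

/-- The quotient of `ℂⁿ \ 0` by the cyclic group generated by the diagonal
contraction `A = diag(α 1, …, α n)` (the underlying topological space of the
diagonal Hopf manifold) is a compact Hausdorff space. -/
theorem hopf_quotient_compact_t2
    (n : ℕ) (hn : 1 ≤ n) (α : Fin n → ℂ)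
    (hα : ∀ i, 0 < ‖α i‖ ∧ ‖α i‖ < 1) :
    CompactSpace (Quot (fun x y : {t : Fin n → ℂ // t ≠ 0} =>
        ∃ k : ℤ, (fun i => (α i) ^ k * x.1 i) = y.1)) ∧
    T2Space (Quot (fun x y : {t : Fin n → ℂ // t ≠ 0} =>
        ∃ k : ℤ, (fun i => (α i) ^ k * x.1 i) = y.1)) := by
  have : Nonempty (Fin n) := ⟨⟨0, hn⟩⟩
  have h0 : ∀ i, α i ≠ 0 := fun i => norm_pos_iff.1 (hα i).1
  obtain ⟨i, hi⟩ := Finite.exists_min fun i => ‖α i‖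
  obtain ⟨j, hj⟩ := Finite.exists_max fun i => ‖α i‖
  exact ⟨HopfQuotient.compactSpace_quot h0 (hα i).1 hi (hα j).1 (hα j).2 hj,
    HopfQuotient.t2Space_quot h0 (hα j).1 (hα j).2 hj⟩
end

section
/- Let n ≥ 1 and let α : Fin n → ℂ satisfy 0 < ‖α i‖ < 1 for every i. Consider the ℤ-action on the subspace X = { t : Fin n → ℂ | t ≠ 0 } of ℂⁿ given by k • t = fun i => (α i)^k * t i. Then the orbit space X/ℤ (with the quotient topology) is homeomorphic to the product S^{2n−1} × S¹, where S^{2n−1} is the unit sphere { x ∈ ℂⁿ : ‖x‖ = 1 } (Euclidean norm on ℂⁿ ≅ ℝ^{2n}) and S¹ is the circle ℝ/ℤ. -/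
/-!
Put `Lᵢ = log αᵢ`, so that `Re Lᵢ < 0`. The `ℤ`-action generated by `diag α` is the restriction to
integer times of the real flow `φ_s(t)ᵢ = exp(s Lᵢ) tᵢ` (`hopfFlow`, `hopfFlow_intCast`). For
`t ≠ 0` the function `s ↦ ‖φ_s(t)‖²` decreases strictly from `+∞` to `0`, so there is exactly one
time `τ(t)` at which the trajectory crosses the unit sphere, and `τ` is continuous because
`τ(t) < a ↔ ‖φ_a(t)‖ < 1` and `a < τ(t) ↔ 1 < ‖φ_a(t)‖` are open conditions on `t`.

Hence `t ↦ (φ_{τ(t)}(t), τ(t))` is a homeomorphism `ℂⁿ \ 0 ≃ S^{2n-1} × ℝ` (`hopfTrivialization`).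
Since `τ(φ_k(t)) = τ(t) - k`, it turns the `ℤ`-action into translation by integers of the second
factor, and the composite `ℂⁿ \ 0 → S^{2n-1} × ℝ/ℤ` is an open surjection whose fibres are exactly
the orbits.
-/

open Filter Topology

noncomputable section

variable {n : ℕ} {α : Fin n → ℂ}

/-- The real one-parameter group of diagonal operators `diag (exp (s log αᵢ))`, which interpolates
the powers of `diag α`. -/
def hopfFlow (α : Fin n → ℂ) (s : ℝ) (t : Fin n → ℂ) : Fin n → ℂ :=
  fun i => Complex.exp (s * Complex.log (α i)) * t i

/-- The squared Euclidean norm on `ℂⁿ`, as a function on `Fin n → ℂ` (whose own norm is the sup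
norm). -/
def sqNorm (t : Fin n → ℂ) : ℝ := ∑ i, ‖t i‖ ^ 2

lemma hopfFlow_add (s s' : ℝ) (t : Fin n → ℂ) :
    hopfFlow α (s + s') t = hopfFlow α s (hopfFlow α s' t) := by
  ext i
  simp only [hopfFlow, Complex.ofReal_add, add_mul, Complex.exp_add, mul_assoc]

lemma hopfFlow_zero (t : Fin n → ℂ) : hopfFlow α 0 t = t := by
  ext i
  simp [hopfFlow]

lemma hopfFlow_intCast (hα : ∀ i, 0 < ‖α i‖ ∧ ‖α i‖ < 1) (k : ℤ) (t : Fin n → ℂ) :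
    hopfFlow α k t = fun i => (α i) ^ k * t i := by
  ext i
  have h : α i ≠ 0 := norm_pos_iff.1 (hα i).1
  simp [hopfFlow, Complex.exp_int_mul, Complex.exp_log h]

lemma hopfFlow_ne_zero (s : ℝ) {t : Fin n → ℂ} (ht : t ≠ 0) : hopfFlow α s t ≠ 0 := by
  obtain ⟨i, hi⟩ := Function.ne_iff.1 ht
  exact Function.ne_iff.2 ⟨i, mul_ne_zero (Complex.exp_ne_zero _) hi⟩

lemma continuous_hopfFlow : Continuous fun p : ℝ × (Fin n → ℂ) => hopfFlow α p.1 p.2 := by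
  unfold hopfFlow
  fun_prop

lemma continuous_sqNorm : Continuous (sqNorm : (Fin n → ℂ) → ℝ) := by
  unfold sqNorm
  fun_prop

lemma sqNorm_hopfFlow (s : ℝ) (t : Fin n → ℂ) :
    sqNorm (hopfFlow α s t) = ∑ i, Real.exp (s * (2 * Real.log ‖α i‖)) * ‖t i‖ ^ 2 := by
  unfold sqNorm hopfFlow
  refine Finset.sum_congr rfl fun i _ => ?_
  rw [norm_mul, Complex.norm_exp, mul_pow, ← Real.exp_nat_mul]
  congr 2
  simp [Complex.log_re]
  ring

lemma log_norm_neg (hα : ∀ i, 0 < ‖α i‖ ∧ ‖α i‖ < 1) (i : Fin n) : 2 * Real.log ‖α i‖ < 0 := by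
  linarith [Real.log_neg (hα i).1 (hα i).2]

lemma strictAnti_sqNorm_hopfFlow (hα : ∀ i, 0 < ‖α i‖ ∧ ‖α i‖ < 1) {t : Fin n → ℂ} (ht : t ≠ 0) :
    StrictAnti fun s : ℝ => sqNorm (hopfFlow α s t) := by
  intro a b hab
  simp only [sqNorm_hopfFlow]
  have key : ∀ i, Real.exp (b * (2 * Real.log ‖α i‖)) < Real.exp (a * (2 * Real.log ‖α i‖)) :=
    fun i => Real.exp_lt_exp.2 (mul_lt_mul_of_neg_right hab (log_norm_neg hα i))
  obtain ⟨i, hi⟩ := Function.ne_iff.1 ht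
  refine Finset.sum_lt_sum (fun i _ => mul_le_mul_of_nonneg_right (key i).le (by positivity))
    ⟨i, Finset.mem_univ i, mul_lt_mul_of_pos_right (key i) ?_⟩
  have : 0 < ‖t i‖ := norm_pos_iff.2 hi
  positivity

lemma tendsto_sqNorm_hopfFlow_atTop (hα : ∀ i, 0 < ‖α i‖ ∧ ‖α i‖ < 1) (t : Fin n → ℂ) :
    Tendsto (fun s : ℝ => sqNorm (hopfFlow α s t)) atTop (𝓝 0) := by
  simp only [sqNorm_hopfFlow]
  rw [show (0 : ℝ) = ∑ i : Fin n, 0 * ‖t i‖ ^ 2 by simp]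
  refine tendsto_finsetSum _ fun i _ => Tendsto.mul_const _ ?_
  exact Real.tendsto_exp_atBot.comp (tendsto_id.atTop_mul_const_of_neg (log_norm_neg hα i))

lemma tendsto_sqNorm_hopfFlow_atBot (hα : ∀ i, 0 < ‖α i‖ ∧ ‖α i‖ < 1) {t : Fin n → ℂ}
    (ht : t ≠ 0) : Tendsto (fun s : ℝ => sqNorm (hopfFlow α s t)) atBot atTop := by
  simp only [sqNorm_hopfFlow]
  obtain ⟨i, hi⟩ := Function.ne_iff.1 ht
  have hpos : 0 < ‖t i‖ ^ 2 := by
    have : 0 < ‖t i‖ := norm_pos_iff.2 hi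
    positivity
  refine tendsto_atTop_mono
    (f := fun s : ℝ => Real.exp (s * (2 * Real.log ‖α i‖)) * ‖t i‖ ^ 2) (fun s => ?_) ?_
  · exact Finset.single_le_sum
      (f := fun i => Real.exp (s * (2 * Real.log ‖α i‖)) * ‖t i‖ ^ 2)
      (fun j _ => by positivity) (Finset.mem_univ i)
  · refine Tendsto.atTop_mul_const hpos ?_
    exact Real.tendsto_exp_atTop.comp (tendsto_id.atBot_mul_const_of_neg (log_norm_neg hα i))

lemma exists_sqNorm_hopfFlow_eq_one (hα : ∀ i, 0 < ‖α i‖ ∧ ‖α i‖ < 1) {t : Fin n → ℂ}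
    (ht : t ≠ 0) : ∃ s : ℝ, sqNorm (hopfFlow α s t) = 1 := by
  have hc : Continuous fun s : ℝ => sqNorm (hopfFlow α s t) :=
    continuous_sqNorm.comp (continuous_hopfFlow.comp (by fun_prop : Continuous fun s => (s, t)))
  obtain ⟨a, ha⟩ :=
    ((tendsto_sqNorm_hopfFlow_atTop hα t).eventually (gt_mem_nhds one_pos)).exists
  obtain ⟨b, hb⟩ :=
    ((tendsto_sqNorm_hopfFlow_atBot hα ht).eventually (eventually_ge_atTop 1)).exists
  exact mem_range_of_exists_le_of_exists_ge hc ⟨a, ha.le⟩ ⟨b, hb⟩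

/-- The time `τ(t)` at which the trajectory of `t ≠ 0` crosses the unit sphere. -/
def crossTime (hα : ∀ i, 0 < ‖α i‖ ∧ ‖α i‖ < 1) (t : {t : Fin n → ℂ // t ≠ 0}) : ℝ :=
  (exists_sqNorm_hopfFlow_eq_one hα t.2).choose

lemma sqNorm_hopfFlow_crossTime (hα : ∀ i, 0 < ‖α i‖ ∧ ‖α i‖ < 1)
    (t : {t : Fin n → ℂ // t ≠ 0}) : sqNorm (hopfFlow α (crossTime hα t) t.1) = 1 :=
  (exists_sqNorm_hopfFlow_eq_one hα t.2).choose_spec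

lemma crossTime_eq (hα : ∀ i, 0 < ‖α i‖ ∧ ‖α i‖ < 1) (t : {t : Fin n → ℂ // t ≠ 0}) {s : ℝ}
    (hs : sqNorm (hopfFlow α s t.1) = 1) : crossTime hα t = s :=
  (strictAnti_sqNorm_hopfFlow hα t.2).injective ((sqNorm_hopfFlow_crossTime hα t).trans hs.symm)

lemma crossTime_lt_iff (hα : ∀ i, 0 < ‖α i‖ ∧ ‖α i‖ < 1) (t : {t : Fin n → ℂ // t ≠ 0}) (a : ℝ) :
    crossTime hα t < a ↔ sqNorm (hopfFlow α a t.1) < 1 := by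
  rw [← sqNorm_hopfFlow_crossTime hα t]
  exact (strictAnti_sqNorm_hopfFlow hα t.2).lt_iff_gt.symm

lemma lt_crossTime_iff (hα : ∀ i, 0 < ‖α i‖ ∧ ‖α i‖ < 1) (t : {t : Fin n → ℂ // t ≠ 0}) (a : ℝ) :
    a < crossTime hα t ↔ 1 < sqNorm (hopfFlow α a t.1) := by
  rw [← sqNorm_hopfFlow_crossTime hα t]
  exact (strictAnti_sqNorm_hopfFlow hα t.2).lt_iff_gt.symm

lemma continuous_crossTime (hα : ∀ i, 0 < ‖α i‖ ∧ ‖α i‖ < 1) : Continuous (crossTime hα) := by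
  have hc : ∀ a : ℝ, Continuous fun t : {t : Fin n → ℂ // t ≠ 0} => sqNorm (hopfFlow α a t.1) :=
    fun a => continuous_sqNorm.comp (continuous_hopfFlow.comp
      (by fun_prop : Continuous fun t : {t : Fin n → ℂ // t ≠ 0} => (a, t.1)))
  refine continuous_iff_continuousAt.2 fun t => tendsto_order.2 ⟨fun a ha => ?_, fun a ha => ?_⟩
  · simp only [lt_crossTime_iff] at ha ⊢
    exact (hc a).continuousAt.eventually (lt_mem_nhds ha)
  · simp only [crossTime_lt_iff] at ha ⊢
    exact (hc a).continuousAt.eventually (gt_mem_nhds ha)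

lemma mem_sphere_iff_sqNorm (x : EuclideanSpace ℂ (Fin n)) :
    x ∈ Metric.sphere (0 : EuclideanSpace ℂ (Fin n)) 1 ↔ sqNorm x.ofLp = 1 := by
  rw [mem_sphere_zero_iff_norm, EuclideanSpace.norm_eq, Real.sqrt_eq_one, sqNorm]

lemma ofLp_ne_zero_of_mem_sphere (x : Metric.sphere (0 : EuclideanSpace ℂ (Fin n)) 1) :
    x.1.ofLp ≠ 0 := by
  intro h
  have := (mem_sphere_iff_sqNorm x.1).1 x.2
  simp [h, sqNorm] at this

/-- The homeomorphism `ℂⁿ \ 0 ≃ S^{2n-1} × ℝ`, `t ↦ (φ_{τ(t)}(t), τ(t))`, with inverse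
`(x, s) ↦ φ_{-s}(x)`. -/
def hopfTrivialization (hα : ∀ i, 0 < ‖α i‖ ∧ ‖α i‖ < 1) :
    {t : Fin n → ℂ // t ≠ 0} ≃ₜ Metric.sphere (0 : EuclideanSpace ℂ (Fin n)) 1 × ℝ where
  toFun t := (⟨WithLp.toLp 2 (hopfFlow α (crossTime hα t) t.1),
    (mem_sphere_iff_sqNorm _).2 (sqNorm_hopfFlow_crossTime hα t)⟩, crossTime hα t)
  invFun p := ⟨hopfFlow α (-p.2) p.1.1.ofLp,
    hopfFlow_ne_zero _ (ofLp_ne_zero_of_mem_sphere p.1)⟩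
  left_inv t := by
    apply Subtype.ext
    simp [← hopfFlow_add, hopfFlow_zero]
  right_inv p := by
    have h : crossTime hα ⟨hopfFlow α (-p.2) p.1.1.ofLp,
        hopfFlow_ne_zero _ (ofLp_ne_zero_of_mem_sphere p.1)⟩ = p.2 := by
      apply crossTime_eq
      simpa [← hopfFlow_add, hopfFlow_zero] using (mem_sphere_iff_sqNorm p.1.1).1 p.1.2
    refine Prod.ext (Subtype.ext ?_) h
    simp [h, ← hopfFlow_add, hopfFlow_zero]
  continuous_toFun := by
    have h := continuous_crossTime hα
    refine Continuous.prodMk (Continuous.subtype_mk ?_ _) h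
    exact (PiLp.continuous_toLp 2 _).comp
      (continuous_hopfFlow.comp (h.prodMk continuous_subtype_val))
  continuous_invFun := by
    refine Continuous.subtype_mk (continuous_hopfFlow.comp (Continuous.prodMk (by fun_prop) ?_)) _
    exact (PiLp.continuous_ofLp 2 _).comp (continuous_subtype_val.comp continuous_fst)

/-- The projection `ℂⁿ \ 0 → S^{2n-1} × ℝ/ℤ` whose fibres are the orbits of `diag α`. -/
def hopfProj (hα : ∀ i, 0 < ‖α i‖ ∧ ‖α i‖ < 1) (t : {t : Fin n → ℂ // t ≠ 0}) :
    Metric.sphere (0 : EuclideanSpace ℂ (Fin n)) 1 × AddCircle (1 : ℝ) :=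
  Prod.map id (fun s : ℝ => (s : AddCircle (1 : ℝ))) (hopfTrivialization hα t)

lemma isOpenQuotientMap_hopfProj (hα : ∀ i, 0 < ‖α i‖ ∧ ‖α i‖ < 1) :
    IsOpenQuotientMap (hopfProj hα) :=
  (IsOpenQuotientMap.id.prodMap QuotientAddGroup.isOpenQuotientMap_mk).comp
    (hopfTrivialization hα).isOpenQuotientMap

lemma hopfProj_eq_iff (hα : ∀ i, 0 < ‖α i‖ ∧ ‖α i‖ < 1) (x y : {t : Fin n → ℂ // t ≠ 0}) :
    hopfProj hα x = hopfProj hα y ↔ ∃ k : ℤ, (fun i => (α i) ^ k * x.1 i) = y.1 := by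
  simp only [← hopfFlow_intCast hα]
  have hiff : hopfProj hα x = hopfProj hα y ↔
      hopfFlow α (crossTime hα x) x.1 = hopfFlow α (crossTime hα y) y.1 ∧
        ∃ k : ℤ, (k : ℝ) = crossTime hα x - crossTime hα y := by
    rw [hopfProj, hopfProj, Prod.ext_iff]
    refine and_congr ?_ ?_
    · simp [hopfTrivialization, Subtype.ext_iff]
    · simp only [hopfTrivialization, Homeomorph.homeomorph_mk_coe, Equiv.coe_fn_mk, Prod.map_snd]
      rw [← sub_eq_zero, ← AddCircle.coe_sub, AddCircle.coe_eq_zero_iff]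
      simp
  rw [hiff]
  constructor
  · rintro ⟨h, k, hk⟩
    refine ⟨k, ?_⟩
    rw [hk, sub_eq_neg_add, hopfFlow_add, h, ← hopfFlow_add, neg_add_cancel, hopfFlow_zero]
  · rintro ⟨k, hk⟩
    have hτ : crossTime hα x = crossTime hα y + k := by
      apply crossTime_eq
      rw [hopfFlow_add, hk, sqNorm_hopfFlow_crossTime]
    exact ⟨by rw [hτ, hopfFlow_add, hk], k, by rw [hτ]; ring⟩

end

/-- The diagonal Hopf manifold `(ℂⁿ \ 0)/⟨A⟩` is homeomorphic to
`S^{2n−1} × S¹`, where `S^{2n−1}` is the unit sphere of the Euclidean norm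
on `ℂⁿ` and `S¹ = ℝ/ℤ`. -/
theorem hopf_quotient_homeomorph_sphere_circle
    (n : ℕ) (hn : 1 ≤ n) (α : Fin n → ℂ)
    (hα : ∀ i, 0 < ‖α i‖ ∧ ‖α i‖ < 1) :
    Nonempty ((Quot (fun x y : {t : Fin n → ℂ // t ≠ 0} =>
        ∃ k : ℤ, (fun i => (α i) ^ k * x.1 i) = y.1)) ≃ₜ
      (Metric.sphere (0 : EuclideanSpace ℂ (Fin n)) 1 × AddCircle (1 : ℝ))) := by
  have hq := isOpenQuotientMap_hopfProj hα
  let F := Quot.lift (r := fun x y : {t : Fin n → ℂ // t ≠ 0} =>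
    ∃ k : ℤ, (fun i => (α i) ^ k * x.1 i) = y.1) (hopfProj hα)
    fun x y h => (hopfProj_eq_iff hα x y).2 h
  have hF : Continuous F := continuous_quot_lift _ hq.continuous
  have hinj : Function.Injective F := by
    rintro ⟨x⟩ ⟨y⟩ h
    exact Quot.sound ((hopfProj_eq_iff hα x y).1 h)
  have hsurj : Function.Surjective F := fun p =>
    let ⟨x, hx⟩ := hq.surjective p
    ⟨Quot.mk _ x, hx⟩
  have hopen : IsOpenMap F := IsOpenMap.of_comp continuous_quot_mk Quot.mk_surjective
    hq.isOpenMap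
  exact ⟨(Equiv.ofBijective F ⟨hinj, hsurj⟩).toHomeomorphOfContinuousOpen hF hopen⟩
end
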